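/- Let V be a finite vertex set, let w be a weight function on V with values in ℕ ∪ {∞}, let s ∈ V, let V' ⊆ V with s ∈ V', and let h ≥ 1 and ℓ ≥ 0 be integers. Define the capped virtual weight function w* on V' by: w*(u',v') = d_w(u',v') if d_w^h(u',v') = d_w(u',v') ≤ ℓ, and w*(u',v') = ∞ otherwise. Then: (i) for every u' ∈ V', d_{w*}(s,u') ≥ d_w(s,u'); (ii) if t' ∈ V' satisfies d_w(s,t') ≤ ℓ and there exists a path P = (s = v_0, v_1, …, v_m = t') from s to t' of w-length d_w(s,t') together with indices 0 = i_0 < i_1 < ⋯ < i_p = m such that v_{i_j} ∈ V' for every j and i_{j+1} − i_j ≤ h for every j, then d_{w*}(s,t') = d_w(s,t'). -/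

import Mathlib

/-!
Both parts rest on the triangle inequality for `dist` (`dist_triangle`).

Part (i): every virtual weight satisfies `dist w u v ≤ w* u v`, so the triangle inequality, applied
along a virtual path, bounds the length of that path below by the distance of its endpoints
(`dist_le_walkLen_of_le`).

Part (ii): write the shortest path as `g 0, …, g m`. Each segment from `g i` to `g j` of a shortest
path is itself shortest: otherwise replacing it would shorten the whole path, by the triangle
inequality and cancellation of the finite lengths (`segment_le_dist`). A segment with at most `h`
hops therefore witnesses `hdist = dist`, and its length is at most that of the whole path, hence at
most `ℓ`; so its endpoints are joined by a virtual edge whose weight is the length of the segment.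
The virtual edges of consecutive segments form a virtual path with the length of the original path.
-/

open scoped ENNReal ENat

namespace Paper

variable {V : Type*} {α : Type*}

/-- The length of a walk `l` (a list of vertices) under weight `w`:
the sum of the weights of consecutive pairs. -/
def walkLen [AddCommMonoid α] (w : V → V → α) (l : List V) : α :=
  ((l.zip l.tail).map fun p => w p.1 p.2).sum

/-- `l` is a path from `s` to `t` in the weighted digraph `w`: nonempty,
starts at `s`, ends at `t`, and every consecutive pair is an edge (finite weight). -/
def IsPathFrom [AddCommMonoid α] [CompleteLattice α]
    (w : V → V → α) (s t : V) (l : List V) : Prop :=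
  l ≠ [] ∧ l.head? = some s ∧ l.getLast? = some t ∧ l.Chain' (fun u v => w u v ≠ ⊤)

/-- The distance from `s` to `t`: the infimum of lengths of paths from `s` to `t`
(`⊤` if there is no path). -/
noncomputable def dist [AddCommMonoid α] [CompleteLattice α]
    (w : V → V → α) (s t : V) : α :=
  sInf {x | ∃ l, IsPathFrom w s t l ∧ walkLen w l = x}

/-- The `h`-hop distance from `s` to `t`: the infimum of lengths of paths
from `s` to `t` with at most `h` hops. -/
noncomputable def hdist [AddCommMonoid α] [CompleteLattice α]
    (h : ℕ) (w : V → V → α) (s t : V) : α :=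
  sInf {x | ∃ l, IsPathFrom w s t l ∧ l.length ≤ h + 1 ∧ walkLen w l = x}

/-! ### Paths and the triangle inequality -/

theorem walkLen_singleton [AddCommMonoid α] (w : V → V → α) (a : V) : walkLen w [a] = 0 := by
  simp [walkLen]

theorem walkLen_cons_cons [AddCommMonoid α] (w : V → V → α) (a b : V) (l : List V) :
    walkLen w (a :: b :: l) = w a b + walkLen w (b :: l) := by
  simp [walkLen]

theorem isPathFrom_singleton [AddCommMonoid α] [CompleteLattice α] (w : V → V → α) (a : V) :
    IsPathFrom w a a [a] := by
  refine ⟨by simp, by simp, by simp, ?_⟩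
  exact List.isChain_singleton a

theorem isPathFrom_cons_cons [AddCommMonoid α] [CompleteLattice α] {w : V → V → α}
    {s t a b : V} {l : List V} :
    IsPathFrom w s t (a :: b :: l) ↔ a = s ∧ w a b ≠ ⊤ ∧ IsPathFrom w b t (b :: l) := by
  unfold IsPathFrom
  constructor
  · rintro ⟨-, h2, h3, h4⟩
    have h4' := List.isChain_cons_cons.1 h4
    exact ⟨by simpa using h2, h4'.1, by simp, by simp, by simpa using h3, h4'.2⟩
  · rintro ⟨h1, h2, -, -, h3, h4⟩
    exact ⟨by simp, by simp [h1], by simpa using h3, List.isChain_cons_cons.2 ⟨h2, h4⟩⟩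

theorem dist_le_walkLen {w : V → V → ℕ∞} {s t : V} {l : List V} (hl : IsPathFrom w s t l) :
    dist w s t ≤ walkLen w l :=
  sInf_le ⟨l, hl, rfl⟩

theorem dist_le_hdist (h : ℕ) (w : V → V → ℕ∞) (s t : V) : dist w s t ≤ hdist h w s t := by
  refine sInf_le_sInf ?_
  rintro x ⟨l, hl, -, hx⟩
  exact ⟨l, hl, hx⟩

/-- A finite distance is attained, because `ℕ∞` is well-ordered. -/
theorem exists_path_of_dist_ne_top {w : V → V → ℕ∞} {s t : V} (hd : dist w s t ≠ ⊤) :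
    ∃ l, IsPathFrom w s t l ∧ walkLen w l = dist w s t := by
  have hne : {x | ∃ l, IsPathFrom w s t l ∧ walkLen w l = x}.Nonempty := by
    by_contra hcon
    rw [Set.not_nonempty_iff_eq_empty] at hcon
    exact hd (by rw [dist, hcon, sInf_empty])
  exact csInf_mem hne

theorem dist_self_eq_zero (w : V → V → ℕ∞) (a : V) : dist w a a = 0 := by
  have := dist_le_walkLen (isPathFrom_singleton w a)
  rw [walkLen_singleton] at this
  exact le_antisymm this bot_le

theorem dist_le_edge_add (w : V → V → ℕ∞) (a b c : V) : dist w a c ≤ w a b + dist w b c := by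
  by_cases hab : w a b = ⊤
  · simp [hab]
  by_cases hbc : dist w b c = ⊤
  · simp [hbc]
  obtain ⟨l, hl, hlen⟩ := exists_path_of_dist_ne_top hbc
  rcases l with _ | ⟨x, l⟩
  · exact absurd rfl hl.1
  obtain rfl : x = b := by simpa using hl.2.1
  rw [← hlen, ← walkLen_cons_cons]
  exact dist_le_walkLen (isPathFrom_cons_cons.2 ⟨rfl, hab, hl⟩)

theorem dist_le_walkLen_add {w : V → V → ℕ∞} {b c : V} (l : List V) :
    ∀ a, IsPathFrom w a b l → dist w a c ≤ walkLen w l + dist w b c := by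
  induction l with
  | nil => intro a hl; exact absurd rfl hl.1
  | cons x l ih =>
    intro a hl
    rcases l with _ | ⟨y, l⟩
    · obtain rfl : x = a := by simpa using hl.2.1
      obtain rfl : x = b := by simpa using hl.2.2.1
      simp [walkLen_singleton]
    · obtain ⟨rfl, -, hl'⟩ := isPathFrom_cons_cons.1 hl
      rw [walkLen_cons_cons, add_assoc]
      exact (dist_le_edge_add w x y c).trans (add_le_add_right (ih y hl') _)

theorem dist_triangle (w : V → V → ℕ∞) (a b c : V) :
    dist w a c ≤ dist w a b + dist w b c := by
  by_cases hab : dist w a b = ⊤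
  · simp [hab]
  obtain ⟨l, hl, hlen⟩ := exists_path_of_dist_ne_top hab
  rw [← hlen]
  exact dist_le_walkLen_add l a hl

/-! ### Lower bound for virtual paths -/

/-- If every edge of a graph on a subset weighs at least the distance of its endpoints, then so
does every path. -/
theorem dist_le_walkLen_of_le {w : V → V → ℕ∞} {V' : Set V} {w' : V' → V' → ℕ∞}
    (hw : ∀ u v : V', dist w ↑u ↑v ≤ w' u v) {b : V'} (l : List V') :
    ∀ a : V', IsPathFrom w' a b l → dist w ↑a ↑b ≤ walkLen w' l := by
  induction l with
  | nil => intro a hl; exact absurd rfl hl.1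
  | cons x l ih =>
    intro a hl
    rcases l with _ | ⟨y, l⟩
    · obtain rfl : x = a := by simpa using hl.2.1
      obtain rfl : x = b := by simpa using hl.2.2.1
      simp [dist_self_eq_zero]
    · obtain ⟨rfl, -, hl'⟩ := isPathFrom_cons_cons.1 hl
      rw [walkLen_cons_cons]
      exact (dist_triangle w x y b).trans (add_le_add (hw x y) (ih y hl'))

/-! ### Segments of an indexed path -/

theorem walkLen_map_range (w : V → V → ℕ∞) (n : ℕ) :
    ∀ g : ℕ → V, walkLen w ((List.range (n + 1)).map g)
      = ∑ k ∈ Finset.range n, w (g k) (g (k + 1)) := by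
  induction n with
  | zero => intro g; simp [walkLen_singleton]
  | succ n ih =>
    intro g
    have h1 := ih (g ∘ Nat.succ)
    rw [List.range_succ_eq_map, List.map_cons, List.map_map] at h1
    rw [List.range_succ_eq_map, List.map_cons, List.map_map, List.range_succ_eq_map,
      List.map_cons, List.map_map, walkLen_cons_cons, h1, Finset.sum_range_succ', add_comm]
    rfl

theorem isPathFrom_map_range {w : V → V → ℕ∞} (n : ℕ) :
    ∀ g : ℕ → V, (∀ k < n, w (g k) (g (k + 1)) ≠ ⊤) →
      IsPathFrom w (g 0) (g n) ((List.range (n + 1)).map g) := by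
  induction n with
  | zero => intro g _; exact isPathFrom_singleton w (g 0)
  | succ n ih =>
    intro g hg
    have h1 := ih (g ∘ Nat.succ) fun k hk => hg (k + 1) (by omega)
    rw [List.range_succ_eq_map, List.map_cons, List.map_map] at h1
    rw [List.range_succ_eq_map, List.map_cons, List.map_map, List.range_succ_eq_map,
      List.map_cons, List.map_map]
    exact isPathFrom_cons_cons.2 ⟨rfl, hg 0 (by omega), h1⟩

/-- The segment of a vertex sequence between the indices `i` and `j` is a path with `j - i` hops. -/
theorem exists_segment {w : V → V → ℕ∞} {g : ℕ → V} {i j : ℕ} (hij : i ≤ j)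
    (hg : ∀ k, i ≤ k → k < j → w (g k) (g (k + 1)) ≠ ⊤) :
    ∃ l, IsPathFrom w (g i) (g j) l ∧ l.length = j - i + 1 ∧
      walkLen w l = ∑ k ∈ Finset.Ico i j, w (g k) (g (k + 1)) := by
  refine ⟨(List.range (j - i + 1)).map fun k => g (i + k), ?_, by simp, ?_⟩
  · have := isPathFrom_map_range (w := w) (j - i) (fun k => g (i + k))
      fun k hk => hg (i + k) (by omega) (by omega)
    simpa [Nat.add_sub_cancel' hij] using this
  · rw [walkLen_map_range, Finset.sum_Ico_eq_sum_range]
    rfl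

theorem dist_le_segment {w : V → V → ℕ∞} {g : ℕ → V} {i j : ℕ} (hij : i ≤ j)
    (hg : ∀ k, i ≤ k → k < j → w (g k) (g (k + 1)) ≠ ⊤) :
    dist w (g i) (g j) ≤ ∑ k ∈ Finset.Ico i j, w (g k) (g (k + 1)) := by
  obtain ⟨l, hl, -, hlen⟩ := exists_segment hij hg
  exact hlen ▸ dist_le_walkLen hl

theorem hdist_le_segment {w : V → V → ℕ∞} {g : ℕ → V} {h i j : ℕ} (hij : i ≤ j)
    (hh : j ≤ i + h) (hg : ∀ k, i ≤ k → k < j → w (g k) (g (k + 1)) ≠ ⊤) :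
    hdist h w (g i) (g j) ≤ ∑ k ∈ Finset.Ico i j, w (g k) (g (k + 1)) := by
  obtain ⟨l, hl, hn, hlen⟩ := exists_segment hij hg
  exact sInf_le ⟨l, hl, by omega, hlen⟩

/-- A segment of a shortest path of finite length is a shortest path. -/
theorem segment_le_dist {w : V → V → ℕ∞} {g : ℕ → V} {i j m : ℕ} (hij : i ≤ j) (hjm : j ≤ m)
    (hg : ∀ k < m, w (g k) (g (k + 1)) ≠ ⊤)
    (hopt : ∑ k ∈ Finset.Ico 0 m, w (g k) (g (k + 1)) = dist w (g 0) (g m))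
    (hfin : dist w (g 0) (g m) ≠ ⊤) :
    ∑ k ∈ Finset.Ico i j, w (g k) (g (k + 1)) ≤ dist w (g i) (g j) := by
  have h1 := dist_le_segment (w := w) (g := g) (Nat.zero_le i) fun k _ hk => hg k (by omega)
  have h2 := dist_le_segment (w := w) (g := g) hjm fun k _ hk => hg k hk
  have h3 : dist w (g 0) (g m) ≤ dist w (g 0) (g i) + (dist w (g i) (g j) + dist w (g j) (g m)) :=
    (dist_triangle w _ (g i) _).trans (add_le_add_right (dist_triangle w _ (g j) _) _)
  have h4 := h3.trans (add_le_add h1 (add_le_add_right h2 _))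
  rw [← hopt] at h4 hfin
  rw [← Finset.sum_Ico_consecutive _ (Nat.zero_le i) (hij.trans hjm),
    ← Finset.sum_Ico_consecutive _ hij hjm] at h4 hfin
  generalize (∑ k ∈ Finset.Ico 0 i, w (g k) (g (k + 1))) = A at h4 hfin
  generalize (∑ k ∈ Finset.Ico i j, w (g k) (g (k + 1))) = B at h4 hfin ⊢
  generalize (∑ k ∈ Finset.Ico j m, w (g k) (g (k + 1))) = C at h4 hfin
  simp only [ne_eq, ENat.add_eq_top, not_or] at hfin
  -- Cancellation in `ℕ∞` needs the outer segments `A` and `C` to have finite length.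
  have h5 := (ENat.add_le_add_iff_left hfin.1).1 h4
  exact (ENat.add_le_add_iff_right hfin.2.2).1 h5

/-- Sums over consecutive segments add up; the first conjunct, needed to join the last segment to the
earlier ones, is carried along in the induction. -/
theorem sum_segments (F : ℕ → ℕ∞) (f : ℕ → ℕ) (p : ℕ) (hf : ∀ j < p, f j < f (j + 1)) :
    f 0 ≤ f p ∧
    ∑ j ∈ Finset.range p, ∑ k ∈ Finset.Ico (f j) (f (j + 1)), F k
      = ∑ k ∈ Finset.Ico (f 0) (f p), F k := by
  induction p with
  | zero => simp
  | succ p ih =>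
    obtain ⟨h1, h2⟩ := ih fun j hj => hf j (by omega)
    have h3 := hf p (by omega)
    refine ⟨by omega, ?_⟩
    rw [Finset.sum_range_succ, h2, Finset.sum_Ico_consecutive _ h1 h3.le]

/-! ### Distances in the capped virtual graph -/

/-- Capped virtual graph on `V' ⊆ V` with `w*(u',v') = d_w(u',v')` when
`d_w^h(u',v') = d_w(u',v') ≤ ℓ` and `⊤` otherwise. Then (i) `d_{w*}(s,u') ≥ d_w(s,u')`
for all `u' ∈ V'`; (ii) if `t' ∈ V'` has `d_w(s,t') ≤ ℓ` and a shortest path from `s`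
hitting `V'` at indices `0 = i_0 < i_1 < ⋯ < i_p = m` with consecutive gaps at most `h`,
then `d_{w*}(s,t') = d_w(s,t')`. -/
theorem statement9 {V : Type*} [Fintype V] [DecidableEq V]
    (w : V → V → ℕ∞) (s : V) (V' : Set V) (hs : s ∈ V')
    (h : ℕ) (hh : 1 ≤ h) (ℓ : ℕ)
    (wstar : V' → V' → ℕ∞)
    (hws : ∀ u v : V', wstar u v =
      if hdist h w ↑u ↑v = dist w ↑u ↑v ∧ dist w ↑u ↑v ≤ (ℓ : ℕ∞) then dist w ↑u ↑v
      else ⊤) :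
    (∀ u : V', dist w s ↑u ≤ dist wstar ⟨s, hs⟩ u) ∧
    (∀ (t : V) (ht : t ∈ V') (l : List V) (p : ℕ) (f : ℕ → ℕ),
      dist w s t ≤ (ℓ : ℕ∞) →
      IsPathFrom w s t l → walkLen w l = dist w s t →
      f 0 = 0 → f p = l.length - 1 →
      (∀ j < p, f j < f (j+1)) →
      (∀ j ≤ p, f j < l.length ∧ l.getD (f j) s ∈ V') →
      (∀ j < p, f (j+1) ≤ f j + h) →
      dist wstar ⟨s, hs⟩ ⟨t, ht⟩ = dist w s t) := by
  have hle : ∀ u v : V', dist w ↑u ↑v ≤ wstar u v := by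
    intro u v
    rw [hws]
    split_ifs
    · exact le_rfl
    · exact le_top
  have part1 : ∀ u : V', dist w s ↑u ≤ dist wstar ⟨s, hs⟩ u := by
    intro u
    refine le_sInf ?_
    rintro x ⟨l, hl, rfl⟩
    exact dist_le_walkLen_of_le hle l ⟨s, hs⟩ hl
  refine ⟨part1, ?_⟩
  intro t ht l p f hℓ hl hlen hf0 hfp hmono hmem hgap
  refine le_antisymm ?_ (part1 ⟨t, ht⟩)
  obtain ⟨m, hm⟩ : ∃ m, l.length = m + 1 :=
    Nat.exists_eq_succ_of_ne_zero (by simpa using hl.1)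
  set g : ℕ → V := fun k => l.getD k s with hg
  have hlg : l = (List.range (m + 1)).map g := by
    refine List.ext_getElem (by simp [hm]) ?_
    intro k h1 h2
    simp [hg, h1]
  have hg0 : g 0 = s := by
    have := hl.2.1
    rw [List.head?_eq_getElem?] at this
    simp [hg, this]
  have hgm : g m = t := by
    have := hl.2.2.1
    rw [List.getLast?_eq_getElem?, hm, Nat.add_sub_cancel] at this
    simp [hg, this]
  have hedge : ∀ k < m, w (g k) (g (k + 1)) ≠ ⊤ := by
    intro k hk
    have h1 := List.isChain_iff_getElem.1 hl.2.2.2 k (by omega)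
    have e1 : g k = l[k] := by simp [hg, show k < l.length by omega]
    have e2 : g (k + 1) = l[k + 1] := by simp [hg, show k + 1 < l.length by omega]
    rw [e1, e2]
    exact h1
  have hopt : ∑ k ∈ Finset.Ico 0 m, w (g k) (g (k + 1)) = dist w (g 0) (g m) := by
    rw [hg0, hgm, ← hlen, Nat.Ico_zero_eq_range, ← walkLen_map_range, ← hlg]
  have hfin : dist w s t ≠ ⊤ := ne_top_of_le_ne_top (ENat.natCast_ne_top ℓ) hℓ
  have hfle : ∀ j ≤ p, f j ≤ m := fun j hj => by have := (hmem j hj).1; omega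
  -- Indices beyond `p` are irrelevant; there `G` takes the default value `s`.
  classical
  let G : ℕ → V' := fun j => if hj : g (f j) ∈ V' then ⟨g (f j), hj⟩ else ⟨s, hs⟩
  have hG : ∀ j (hj : j ≤ p), G j = ⟨g (f j), (hmem j hj).2⟩ := fun j hj =>
    dif_pos (hmem j hj).2
  have hstar : ∀ j < p, wstar (G j) (G (j + 1))
      = ∑ k ∈ Finset.Ico (f j) (f (j + 1)), w (g k) (g (k + 1)) := by
    intro j hj
    have hfj := hmono j hj
    have hfm := hfle (j + 1) hj
    have hE : ∀ k, f j ≤ k → k < f (j + 1) → w (g k) (g (k + 1)) ≠ ⊤ :=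
      fun k _ hk => hedge k (by omega)
    have h1 := segment_le_dist hfj.le hfm hedge hopt (by rwa [hg0, hgm])
    have h2 := dist_le_segment hfj.le hE
    have h3 := hdist_le_segment hfj.le (hgap j hj) hE
    have h4 := dist_le_hdist h w (g (f j)) (g (f (j + 1)))
    have h5 : ∑ k ∈ Finset.Ico (f j) (f (j + 1)), w (g k) (g (k + 1))
        ≤ ∑ k ∈ Finset.Ico 0 m, w (g k) (g (k + 1)) :=
      Finset.sum_le_sum_of_subset (Finset.Ico_subset_Ico (Nat.zero_le _) hfm)
    rw [hopt, hg0, hgm] at h5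
    rw [hG j hj.le, hG (j + 1) hj, hws, if_pos]
    · exact le_antisymm h2 h1
    · exact ⟨le_antisymm (h3.trans h1) h4, h2.trans (h5.trans hℓ)⟩
  have hstar_fin : ∀ j < p, wstar (G j) (G (j + 1)) ≠ ⊤ := by
    intro j hj
    rw [hstar j hj]
    refine ne_top_of_le_ne_top hfin ?_
    rw [← hg0, ← hgm, ← hopt]
    exact Finset.sum_le_sum_of_subset (Finset.Ico_subset_Ico (Nat.zero_le _) (hfle (j + 1) hj))
  have hfpm : f p = m := by omega
  have hG0 : G 0 = ⟨s, hs⟩ := by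
    rw [hG 0 (Nat.zero_le p)]
    exact Subtype.ext (by simp only [hf0, hg0])
  have hGp : G p = ⟨t, ht⟩ := by
    rw [hG p le_rfl]
    exact Subtype.ext (by simp only [hfpm, hgm])
  have key := dist_le_walkLen (isPathFrom_map_range p G hstar_fin)
  rw [walkLen_map_range, Finset.sum_congr rfl fun j hj => hstar j (Finset.mem_range.1 hj),
    (sum_segments (fun k => w (g k) (g (k + 1))) f p hmono).2, hf0, hfpm, hopt, hg0, hgm,
    hG0, hGp] at key
  exact key

end Paper
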